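/- Let u be a C² convex function on a neighborhood of the closed disc B̄_t(0) ⊂ ℝ² with u(0) = 0, u ≥ 0, and det D²u ≥ C₀⁻¹ > 0, and let b := sup_{B̄_t(0)}|Du|. Suppose m > 0 and τ ∈ (0, t] are such that u(x₁, 0) ≤ m for all x₁ ∈ (−τ, t). Then for every x₂ with |x₂| < t/4, ∫_{t/4}^{3t/4} ∂_{x₂x₂}u(x₁, x₂) dx₁ ≥ (t³ / (64·C₀)) · ( m + 2b|x₂| )⁻¹. -/

import Mathlib

open Metric Set MeasureTheory

noncomputable section

abbrev E2 : Type := EuclideanSpace ℝ (Fin 2)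

/-- The point of `ℝ²` with coordinates `(a, b)`. -/
def pt (a b : ℝ) : E2 := (WithLp.equiv 2 (Fin 2 → ℝ)).symm ![a, b]

/-- The standard basis vectors of `ℝ²`. -/
def e2 (i : Fin 2) : E2 := EuclideanSpace.single i 1

/-- The Hessian matrix `D²u(x)`. -/
def hess (u : E2 → ℝ) (x : E2) : Matrix (Fin 2) (Fin 2) ℝ :=
  Matrix.of fun i j => iteratedFDeriv ℝ 2 u x ![e2 i, e2 j]

/-- The determinant of the Hessian, `det D²u(x)`. -/
def detHess (u : E2 → ℝ) (x : E2) : ℝ := (hess u x).det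

/-- The operator norm of a `2 × 2` real matrix. -/
def opNorm2 (M : Matrix (Fin 2) (Fin 2) ℝ) : ℝ :=
  ‖(Matrix.toEuclideanCLM (𝕜 := ℝ) M : E2 →L[ℝ] E2)‖

/-- The partial Legendre transform of `u` in the `e₁`-direction (relative to `B_R(0)`). -/
def pLeg (R : ℝ) (u : E2 → ℝ) (y : E2) : ℝ :=
  sSup ((fun x₁ => x₁ * y 0 - u (pt x₁ (y 1))) '' {x₁ : ℝ | pt x₁ (y 1) ∈ ball (0:E2) R})

/-- The partial Legendre map `𝒫(x₁,x₂) = (∂_{x₁}u(x), x₂)`. -/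
def Pmap (u : E2 → ℝ) (x : E2) : E2 := pt (fderiv ℝ u x (e2 0)) (x 1)

/-!
On the horizontal segment `[t/4, 3t/4] × {x₂}` write `A = ∂₁₁u ≥ 0` and `B = ∂₂₂u`. The determinant
bound gives `A B ≥ C₀⁻¹`, so Cauchy–Schwarz yields `C₀⁻¹ (t/2)² ≤ (∫ A) (∫ B)`. Now `∫ A` is the
increment of `∂₁u` along the segment, and for a nonnegative convex function of one variable this
increment is controlled by the values of the function at two points outside the segment. These
values are at most those on the axis, which are `0` and at most `m`, plus `b |x₂|`.
-/

section IntegralInequality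

theorem quadratic_nonneg_of_le_mul {δ A B : ℝ} (hδ : 0 < δ) (hA : 0 ≤ A) (hAB : δ ≤ A * B) (l : ℝ) :
    0 ≤ δ * A * (l * l) + -2 * δ * l + B := by
  have hA_pos : 0 < A := hA.lt_of_ne fun h => by
    rw [← h, zero_mul] at hAB
    exact hδ.not_ge hAB
  refine nonneg_of_mul_nonneg_right ?_ hA_pos
  calc
    0 ≤ δ * (l * A - 1) ^ 2 + (A * B - δ) := by have := sub_nonneg.2 hAB; positivity
    _ = A * (δ * A * (l * l) + -2 * δ * l + B) := by ring

theorem mul_measureReal_univ_sq_le_integral_mul_integral {α : Type*} [MeasurableSpace α]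
    {μ : Measure α} [IsFiniteMeasure μ] {A B : α → ℝ} {δ : ℝ} (hδ : 0 < δ)
    (hA : Integrable A μ) (hB : Integrable B μ) (hA_nonneg : ∀ᵐ x ∂μ, 0 ≤ A x)
    (hAB : ∀ᵐ x ∂μ, δ ≤ A x * B x) :
    δ * μ.real univ ^ 2 ≤ (∫ x, A x ∂μ) * ∫ x, B x ∂μ := by
  have quadratic_nonneg (l : ℝ) :
      0 ≤ δ * (∫ x, A x ∂μ) * (l * l) + -2 * δ * μ.real univ * l + ∫ x, B x ∂μ := by
    have hlinear : Integrable (fun x => δ * (l * l) * A x + -2 * δ * l) μ :=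
      (hA.const_mul _).add (integrable_const _)
    have integral_eq : ∫ x, (δ * (l * l) * A x + -2 * δ * l + B x) ∂μ =
        δ * (l * l) * (∫ x, A x ∂μ) + -2 * δ * l * μ.real univ + ∫ x, B x ∂μ := by
      rw [integral_add hlinear hB, integral_add (hA.const_mul _) (integrable_const _),
        integral_const_mul, integral_const, smul_eq_mul, mul_comm (μ.real univ)]
    calc
      0 ≤ ∫ x, (δ * (l * l) * A x + -2 * δ * l + B x) ∂μ := by
        refine integral_nonneg_of_ae ?_
        filter_upwards [hA_nonneg, hAB] with x hAx hABx
        exact (quadratic_nonneg_of_le_mul hδ hAx hABx l).trans_eq (by ring)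
      _ = _ := by rw [integral_eq]; ring
  have hdiscrim := discrim_le_zero quadratic_nonneg
  rw [discrim] at hdiscrim
  refine le_of_mul_le_mul_left ?_ hδ
  linarith

theorem mul_sub_sq_le_intervalIntegral_mul_intervalIntegral {A B : ℝ → ℝ} {δ p r : ℝ}
    (hδ : 0 < δ) (hpr : p ≤ r) (hA : IntervalIntegrable A volume p r)
    (hB : IntervalIntegrable B volume p r) (hA_nonneg : ∀ s ∈ Ioc p r, 0 ≤ A s)
    (hAB : ∀ s ∈ Ioc p r, δ ≤ A s * B s) :
    δ * (r - p) ^ 2 ≤ (∫ s in p..r, A s) * ∫ s in p..r, B s := by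
  have h := mul_measureReal_univ_sq_le_integral_mul_integral hδ hA.1 hB.1
    (ae_restrict_of_forall_mem measurableSet_Ioc hA_nonneg)
    (ae_restrict_of_forall_mem measurableSet_Ioc hAB)
  rwa [measureReal_restrict_apply_univ, Real.volume_real_Ioc_of_le hpr,
    ← intervalIntegral.integral_of_le hpr, ← intervalIntegral.integral_of_le hpr] at h

end IntegralInequality

theorem hasDerivAt_sub_le_of_convexOn {S : Set ℝ} {f : ℝ → ℝ} {a p r c fp' fr' : ℝ}
    (hf : ConvexOn ℝ S f) (ha : a ∈ S) (hp : p ∈ S) (hr : r ∈ S) (hc : c ∈ S)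
    (hap : a < p) (hrc : r < c) (hfp : 0 ≤ f p) (hfr : 0 ≤ f r)
    (hfp' : HasDerivAt f fp' p) (hfr' : HasDerivAt f fr' r) :
    fr' - fp' ≤ f c / (c - r) + f a / (p - a) := by
  have upper : fr' ≤ f c / (c - r) := by
    refine (hf.le_slope_of_hasDerivAt hr hc hrc hfr').trans ?_
    rw [slope_def_field]
    gcongr
    linarith
  have lower : -(f a / (p - a)) ≤ fp' := by
    refine le_trans ?_ (hf.slope_le_of_hasDerivAt ha hp hap hfp')
    rw [slope_def_field, ← neg_div]
    gcongr
    linarith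
  linarith

section Line

variable {E : Type*} [NormedAddCommGroup E] [NormedSpace ℝ E] {K : Set E} {u : E → ℝ} {v x : E}

theorem convexOn_comp_line (hu : ConvexOn ℝ K u) (v x : E) :
    ConvexOn ℝ ((fun s : ℝ => s • v + x) ⁻¹' K) fun s => u (s • v + x) := by
  have line_eq : (fun s : ℝ => s • v + x) = AffineMap.lineMap x (v + x) := by
    ext s
    simp [AffineMap.lineMap_apply]
  simpa only [line_eq, Function.comp_def, ← congr_fun line_eq] using
    hu.comp_affineMap (AffineMap.lineMap x (v + x))

theorem hasDerivAt_line (v x : E) (s : ℝ) : HasDerivAt (fun s : ℝ => s • v + x) v s := by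
  simpa using ((hasDerivAt_id s).smul_const v).add_const x

theorem hasDerivAt_comp_line {s : ℝ} (hu : DifferentiableAt ℝ u (s • v + x)) :
    HasDerivAt (fun s : ℝ => u (s • v + x)) (fderiv ℝ u (s • v + x) v) s :=
  hu.hasFDerivAt.comp_hasDerivAt s (hasDerivAt_line v x s)

theorem hasDerivAt_fderiv_comp_line {s : ℝ} (hu : ContDiffAt ℝ 2 u (s • v + x)) (w : E) :
    HasDerivAt (fun s : ℝ => fderiv ℝ u (s • v + x) w)
      (fderiv ℝ (fderiv ℝ u) (s • v + x) v w) s := by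
  have hdiff : DifferentiableAt ℝ (fderiv ℝ u) (s • v + x) :=
    (hu.fderiv_right (m := 1) (by norm_num)).differentiableAt (by norm_num)
  exact ((ContinuousLinearMap.apply ℝ ℝ w).hasFDerivAt.comp _
    hdiff.hasFDerivAt).comp_hasDerivAt s (hasDerivAt_line v x s)

theorem intervalIntegrable_fderiv_fderiv_comp_line {p r : ℝ}
    (hu : ∀ s ∈ uIcc p r, ContDiffAt ℝ 2 u (s • v + x)) (w z : E) :
    IntervalIntegrable (fun s : ℝ => fderiv ℝ (fderiv ℝ u) (s • v + x) w z) volume p r := by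
  refine ContinuousOn.intervalIntegrable fun s hs => ContinuousAt.continuousWithinAt ?_
  have hcont : ContinuousAt (fderiv ℝ (fderiv ℝ u)) (s • v + x) :=
    (((hu s hs).fderiv_right (m := 1) (by norm_num)).fderiv_right (m := 0)
      (by norm_num)).continuousAt
  have hcomp : ContinuousAt (fun s : ℝ => fderiv ℝ (fderiv ℝ u) (s • v + x)) s :=
    ContinuousAt.comp (f := fun s : ℝ => s • v + x) hcont (hasDerivAt_line v x s).continuousAt
  exact (hcomp.clm_apply continuousAt_const).clm_apply continuousAt_const

theorem fderiv_fderiv_apply_self_nonneg_of_convexOn (hconv : ConvexOn ℝ K u)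
    (hx : x ∈ interior K) (hu : ContDiffAt ℝ 2 u x) (v : E) :
    0 ≤ fderiv ℝ (fderiv ℝ u) x v v := by
  obtain ⟨ε, hε, hball⟩ : ∃ ε > 0, ball x ε ⊆ {y | y ∈ K ∧ DifferentiableAt ℝ u y} := by
    refine Metric.mem_nhds_iff.1 (Filter.inter_mem (mem_interior_iff_mem_nhds.1 hx) ?_)
    filter_upwards [hu.eventually (by simp)] with y hy
    exact hy.differentiableAt (by norm_num)
  set S : Set ℝ := (fun s : ℝ => s • v + x) ⁻¹' ball x ε
  have hS : IsOpen S := isOpen_ball.preimage (by fun_prop)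
  have h0 : (0 : ℝ) ∈ S := by simpa [S] using hε
  have hderiv : ∀ s ∈ S, HasDerivAt (fun s : ℝ => u (s • v + x)) (fderiv ℝ u (s • v + x) v) s :=
    fun s hs => hasDerivAt_comp_line (hball hs).2
  have hmono : MonotoneOn (fun s : ℝ => fderiv ℝ u (s • v + x) v) S :=
    ((convexOn_comp_line (hconv.subset (fun y hy => (hball hy).1) (convex_ball x ε)) v
      x).monotoneOn_deriv fun s hs => (hderiv s hs).differentiableAt).congr
        fun s hs => (hderiv s hs).deriv
  have hsecond : HasDerivAt (fun s : ℝ => fderiv ℝ u (s • v + x) v)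
      (fderiv ℝ (fderiv ℝ u) x v v) 0 := by
    simpa using hasDerivAt_fderiv_comp_line (s := 0) (v := v) (x := x) (by simpa using hu) v
  rw [← hsecond.deriv, ← derivWithin_of_isOpen hS h0]
  exact hmono.derivWithin_nonneg

theorem mul_sub_sq_le_fderiv_sub_mul_integral_fderiv_fderiv {w : E} {δ p r : ℝ} (hδ : 0 < δ)
    (hpr : p ≤ r) (hu : ∀ s ∈ Icc p r, ContDiffAt ℝ 2 u (s • v + x))
    (hnonneg : ∀ s ∈ Icc p r, 0 ≤ fderiv ℝ (fderiv ℝ u) (s • v + x) v v)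
    (hprod : ∀ s ∈ Icc p r, δ ≤ fderiv ℝ (fderiv ℝ u) (s • v + x) v v *
      fderiv ℝ (fderiv ℝ u) (s • v + x) w w) :
    δ * (r - p) ^ 2 ≤ (fderiv ℝ u (r • v + x) v - fderiv ℝ u (p • v + x) v) *
      ∫ s in p..r, fderiv ℝ (fderiv ℝ u) (s • v + x) w w := by
  rw [← uIcc_of_le hpr] at hu
  rw [← intervalIntegral.integral_eq_sub_of_hasDerivAt
    (fun s hs => hasDerivAt_fderiv_comp_line (hu s hs) v)
    (intervalIntegrable_fderiv_fderiv_comp_line hu v v)]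
  exact mul_sub_sq_le_intervalIntegral_mul_intervalIntegral hδ hpr
    (intervalIntegrable_fderiv_fderiv_comp_line hu v v)
    (intervalIntegrable_fderiv_fderiv_comp_line hu w w)
    (fun s hs => hnonneg s (Ioc_subset_Icc_self hs))
    fun s hs => hprod s (Ioc_subset_Icc_self hs)

theorem fderiv_sub_fderiv_le_of_convexOn {a p r c b : ℝ} (hconv : ConvexOn ℝ K u)
    (hdiff : ∀ y ∈ K, DifferentiableAt ℝ u y) (hpos : ∀ y ∈ K, 0 ≤ u y)
    (hb : ∀ y ∈ K, ‖fderiv ℝ u y‖ ≤ b) (hap : a < p) (hpr : p ≤ r) (hrc : r < c)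
    (ha : a • v ∈ K) (hc : c • v ∈ K) (hax : a • v + x ∈ K) (hcx : c • v + x ∈ K) :
    fderiv ℝ u (r • v + x) v - fderiv ℝ u (p • v + x) v ≤
      (u (c • v) + b * ‖x‖) / (c - r) + (u (a • v) + b * ‖x‖) / (p - a) := by
  have translate_le : ∀ z ∈ K, z + x ∈ K → u (z + x) ≤ u z + b * ‖x‖ := fun z hz hzx => by
    have h := hconv.1.norm_image_sub_le_of_norm_fderiv_le hdiff hb hz hzx
    rw [add_sub_cancel_left] at h
    linarith [le_of_abs_le h]
  have hf := convexOn_comp_line hconv v x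
  have hsegment := hf.1.ordConnected.out hax hcx
  have hp : p • v + x ∈ K := hsegment ⟨hap.le, hpr.trans hrc.le⟩
  have hr : r • v + x ∈ K := hsegment ⟨hap.le.trans hpr, hrc.le⟩
  calc
    _ ≤ u (c • v + x) / (c - r) + u (a • v + x) / (p - a) :=
      hasDerivAt_sub_le_of_convexOn hf hax hp hr hcx hap hrc (hpos _ hp) (hpos _ hr)
        (hasDerivAt_comp_line (hdiff _ hp)) (hasDerivAt_comp_line (hdiff _ hr))
    _ ≤ _ := by
      have := sub_pos.2 hap
      have := sub_pos.2 hrc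
      gcongr
      exacts [translate_le _ hc hcx, translate_le _ ha hax]

theorem mul_sub_sq_le_mul_integral_fderiv_fderiv_of_convexOn {w : E} {δ a p r c b : ℝ}
    (hδ : 0 < δ) (hu : ∀ y ∈ K, ContDiffAt ℝ 2 u y) (hconv : ConvexOn ℝ K u)
    (hpos : ∀ y ∈ K, 0 ≤ u y)
    (hprod : ∀ y ∈ K, δ ≤ fderiv ℝ (fderiv ℝ u) y v v * fderiv ℝ (fderiv ℝ u) y w w)
    (hb : ∀ y ∈ K, ‖fderiv ℝ u y‖ ≤ b) (hap : a < p) (hpr : p ≤ r) (hrc : r < c)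
    (ha : a • v ∈ K) (hc : c • v ∈ K)
    (hx : ∀ s ∈ Icc a c, s • v + x ∈ interior K) :
    δ * (r - p) ^ 2 ≤ ((u (c • v) + b * ‖x‖) / (c - r) + (u (a • v) + b * ‖x‖) / (p - a)) *
      ∫ s in p..r, fderiv ℝ (fderiv ℝ u) (s • v + x) w w := by
  have hac : a ≤ c := by linarith
  have interior_of_mem : ∀ s ∈ Icc p r, s • v + x ∈ interior K :=
    fun s hs => hx s (Icc_subset_Icc hap.le hrc.le hs)
  have mem_of_mem : ∀ s ∈ Icc p r, s • v + x ∈ K :=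
    fun s hs => interior_subset (interior_of_mem s hs)
  have hess_nonneg (z : E) : ∀ s ∈ Icc p r, 0 ≤ fderiv ℝ (fderiv ℝ u) (s • v + x) z z :=
    fun s hs => fderiv_fderiv_apply_self_nonneg_of_convexOn hconv (interior_of_mem s hs)
      (hu _ (mem_of_mem s hs)) z
  calc
    _ ≤ (fderiv ℝ u (r • v + x) v - fderiv ℝ u (p • v + x) v) *
        ∫ s in p..r, fderiv ℝ (fderiv ℝ u) (s • v + x) w w :=
      mul_sub_sq_le_fderiv_sub_mul_integral_fderiv_fderiv hδ hpr
        (fun s hs => hu _ (mem_of_mem s hs)) (hess_nonneg v)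
        fun s hs => hprod _ (mem_of_mem s hs)
    _ ≤ _ := by
      gcongr
      · exact intervalIntegral.integral_nonneg hpr (hess_nonneg w)
      · exact fderiv_sub_fderiv_le_of_convexOn hconv
          (fun y hy => (hu y hy).differentiableAt (by norm_num)) hpos hb hap hpr hrc ha hc
          (interior_subset (hx a ⟨le_rfl, hac⟩)) (interior_subset (hx c ⟨hac, le_rfl⟩))

end Line

theorem norm_gradient_eq_norm_fderiv {E : Type*} [NormedAddCommGroup E] [InnerProductSpace ℝ E]
    [CompleteSpace E] (u : E → ℝ) (x : E) : ‖gradient u x‖ = ‖fderiv ℝ u x‖ :=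
  LinearIsometryEquiv.norm_map _ _

section OrthonormalPair

variable {E : Type*} [NormedAddCommGroup E] [InnerProductSpace ℝ E] {v w : E}

theorem norm_smul_add_smul_sq_of_orthonormal (hv : ‖v‖ = 1) (hw : ‖w‖ = 1)
    (hvw : inner ℝ v w = 0) (s y : ℝ) : ‖s • v + y • w‖ ^ 2 = s ^ 2 + y ^ 2 := by
  have h := norm_add_sq_eq_norm_sq_add_norm_sq_real (x := s • v) (y := y • w)
    (by simp [inner_smul_left, inner_smul_right, hvw])
  simpa [norm_smul, hv, hw, ← sq] using h

theorem smul_add_smul_mem_ball_of_orthonormal (hv : ‖v‖ = 1) (hw : ‖w‖ = 1)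
    (hvw : inner ℝ v w = 0) {t s y : ℝ} (ht : 0 ≤ t) (h : s ^ 2 + y ^ 2 < t ^ 2) :
    s • v + y • w ∈ ball (0 : E) t := by
  rw [← norm_smul_add_smul_sq_of_orthonormal hv hw hvw] at h
  exact mem_ball_zero_iff.2 (lt_of_pow_lt_pow_left₀ 2 ht h)

theorem second_derivative_integral_lower_bound_general {t C₀ b m y : ℝ} {u : E → ℝ}
    (hv : ‖v‖ = 1) (hw : ‖w‖ = 1) (hvw : inner ℝ v w = 0)
    (ht : 0 < t) (hC₀ : 0 < C₀) (hm : 0 < m)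
    (hu : ∀ x ∈ closedBall (0 : E) t, ContDiffAt ℝ 2 u x)
    (hconv : ConvexOn ℝ (closedBall (0 : E) t) u) (hu0 : u 0 = 0)
    (hpos : ∀ x ∈ closedBall (0 : E) t, 0 ≤ u x)
    (hprod : ∀ x ∈ closedBall (0 : E) t,
      C₀⁻¹ ≤ fderiv ℝ (fderiv ℝ u) x v v * fderiv ℝ (fderiv ℝ u) x w w)
    (hb : ∀ x ∈ closedBall (0 : E) t, ‖fderiv ℝ u x‖ ≤ b)
    (haxis : u ((13 * t / 16) • v) ≤ m) (hy : |y| < t / 4) :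
    t ^ 3 / (64 * C₀) * (m + 2 * b * |y|)⁻¹ ≤
      ∫ s in (t / 4)..(3 * t / 4), fderiv ℝ (fderiv ℝ u) (s • v + y • w) w w := by
  have mem_ball {s z : ℝ} (hs : s ∈ Icc 0 (13 * t / 16)) (hz : |z| < t / 4) :
      s • v + z • w ∈ ball (0 : E) t :=
    smul_add_smul_mem_ball_of_orthonormal hv hw hvw ht.le (by
      nlinarith [sq_abs z, abs_nonneg z, hs.1, hs.2])
  have axis_mem {s : ℝ} (hs : s ∈ Icc 0 (13 * t / 16)) : s • v ∈ closedBall (0 : E) t := by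
    simpa using ball_subset_closedBall (mem_ball (z := 0) hs (by simpa using ht))
  have axis_end_mem := axis_mem ⟨by linarith, le_rfl⟩
  set I := ∫ s in (t / 4)..(3 * t / 4), fderiv ℝ (fderiv ℝ u) (s • v + y • w) w w
  -- The points `0` and `13t/16` lie `t/4` and `t/16` outside the interval of length `t/2`; the
  -- latter choice yields the constant `64 = 4 · 16`.
  have key : C₀⁻¹ * (t / 2) ^ 2 ≤ 16 / t * (u ((13 * t / 16) • v) + 5 / 4 * (b * |y|)) * I := by
    have h := mul_sub_sq_le_mul_integral_fderiv_fderiv_of_convexOn (x := y • w) (inv_pos.2 hC₀) hu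
      hconv hpos hprod hb (a := 0) (p := t / 4) (r := 3 * t / 4) (c := 13 * t / 16)
      (by linarith) (by linarith) (by linarith) (axis_mem ⟨le_rfl, by linarith⟩) axis_end_mem
      fun s hs => ball_subset_interior_closedBall (mem_ball hs hy)
    rw [zero_smul, hu0, norm_smul, hw, Real.norm_eq_abs, mul_one, zero_add, sub_zero,
      show 13 * t / 16 - 3 * t / 4 = t / 16 by ring, show 3 * t / 4 - t / 4 = t / 2 by ring] at h
    exact h.trans_eq (congrArg (· * I) (by field_simp; ring))
  have hby : 0 ≤ b * |y| :=
    mul_nonneg ((norm_nonneg _).trans (hb 0 (by simp [ht.le]))) (abs_nonneg y)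
  have hI : 0 < I := by
    have := hpos _ axis_end_mem
    exact pos_of_mul_pos_right (lt_of_lt_of_le (by positivity) key) (by positivity)
  rw [← div_eq_mul_inv, div_le_iff₀ (by linarith)]
  calc
    t ^ 3 / (64 * C₀) = t / 16 * (C₀⁻¹ * (t / 2) ^ 2) := by field_simp; norm_num
    _ ≤ t / 16 * (16 / t * (u ((13 * t / 16) • v) + 5 / 4 * (b * |y|)) * I) := by gcongr
    _ = I * (u ((13 * t / 16) • v) + 5 / 4 * (b * |y|)) := by field_simp
    _ ≤ I * (m + 2 * b * |y|) :=
      mul_le_mul_of_nonneg_left (by linarith) hI.le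

end OrthonormalPair

section Plane

theorem pt_eq_smul_add_smul (a b : ℝ) : pt a b = a • e2 0 + b • e2 1 := by
  ext i
  fin_cases i <;> simp [pt, e2]

theorem hess_apply (u : E2 → ℝ) (x : E2) (i j : Fin 2) :
    hess u x i j = fderiv ℝ (fderiv ℝ u) x (e2 i) (e2 j) := by
  simp [hess, iteratedFDeriv_two_apply]

theorem detHess_le_mul {u : E2 → ℝ} {x : E2} (hu : ContDiffAt ℝ 2 u x) :
    detHess u x ≤ hess u x 0 0 * hess u x 1 1 := by
  have hsymm : hess u x 0 1 = hess u x 1 0 := by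
    simpa only [hess_apply] using (hu.isSymmSndFDerivAt (by simp)).eq (e2 0) (e2 1)
  rw [detHess, Matrix.det_fin_two, hsymm]
  exact sub_le_self _ (mul_self_nonneg _)

end Plane

/-- if u is C² on a neighborhood of B̄_t(0), convex on B̄_t(0),
with u(0) = 0, u ≥ 0, det D²u ≥ C₀⁻¹ > 0, |Du| ≤ b on B̄_t(0), and u(x₁,0) ≤ m
for all x₁ ∈ (−τ, t) with m > 0, τ ∈ (0,t], then for every |x₂| < t/4,
∫_{t/4}^{3t/4} ∂_{x₂x₂}u(x₁,x₂) dx₁ ≥ (t³/(64 C₀)) (m + 2b|x₂|)⁻¹. -/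
theorem second_derivative_integral_lower_bound
    (t C₀ b m τ : ℝ) (ht : 0 < t) (hC₀ : 0 < C₀) (hm : 0 < m)
    (hτ₀ : 0 < τ) (hτt : τ ≤ t)
    (u : E2 → ℝ) (U : Set E2) (hU : IsOpen U) (hUt : closedBall (0:E2) t ⊆ U)
    (hu : ContDiffOn ℝ 2 u U)
    (hconv : ConvexOn ℝ (closedBall (0:E2) t) u)
    (hu0 : u 0 = 0)
    (hpos : ∀ x ∈ closedBall (0:E2) t, 0 ≤ u x)
    (hdet : ∀ x ∈ closedBall (0:E2) t, C₀⁻¹ ≤ detHess u x)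
    (hb : ∀ x ∈ closedBall (0:E2) t, ‖gradient u x‖ ≤ b)
    (haxis : ∀ x₁ : ℝ, x₁ ∈ Set.Ioo (-τ) t → u (pt x₁ 0) ≤ m) :
    ∀ x₂ : ℝ, |x₂| < t / 4 →
      t ^ 3 / (64 * C₀) * (m + 2 * b * |x₂|)⁻¹ ≤
        ∫ x₁ in (t / 4)..(3 * t / 4), hess u (pt x₁ x₂) 1 1 := by
  intro x₂ hx₂
  have hC2 : ∀ x ∈ closedBall (0 : E2) t, ContDiffAt ℝ 2 u x := fun x hx =>
    hu.contDiffAt (hU.mem_nhds (hUt hx))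
  simp only [pt_eq_smul_add_smul, zero_smul, add_zero, hess_apply] at haxis ⊢
  exact second_derivative_integral_lower_bound_general (by simp [e2]) (by simp [e2])
    (by simp [e2, EuclideanSpace.inner_single_left]) ht hC₀ hm hC2 hconv hu0 hpos
    (fun x hx => by simpa only [hess_apply] using (hdet x hx).trans (detHess_le_mul (hC2 x hx)))
    (fun x hx => norm_gradient_eq_norm_fderiv u x ▸ hb x hx)
    (haxis _ ⟨by linarith, by linarith⟩) hx₂
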